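/- arXiv:2008.13128 — 2 statements merged into one kernel-verified Lean document; each statement's English description precedes it below -/
import Mathlib

section
/- Let n be a natural number with n ≥ 27. Then every n-admissible natural number K satisfies 4·K > n². -/
/-!
Differences of the numbers `(i * T - B) / K` are controlled by differences of their ceilings, so `B`
drops out of the admissibility condition. Applied to the line `(i - 1) / q`, whose ceiling increases
right after `i = 1` and `i = q + 1`, this places an integer strictly between `K / (q + 1)` and
`K / (q - 1)` whenever `1 < q ≤ n - 2`. The integers found for `q = n - 2` and `q = n - 4` are
separated by `K / (n - 3)`, hence distinct, and comparing both with the one for `q = n - 3` forces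
the smaller of the two to be at least `(n - 4) / 3`. As it is less than `K / (n - 3)`, this gives
`(n - 3) * (n - 4) < 3 * K`, which implies `n² < 4 * K` from `n = 27` on.
-/

/-- `K` is `n`-admissible: for all real `t, b` there exist integers `T, B` with
`⌈i·t − b⌉ = ⌈(i·T − B)/K⌉` for every `i ∈ {1, …, n}`. -/
def NAdmissible (n K : ℕ) : Prop :=
  ∀ t b : ℝ, ∃ T B : ℤ, ∀ i : ℕ, 1 ≤ i → i ≤ n →
    ⌈(i : ℝ) * t - b⌉ = ⌈((i : ℝ) * (T : ℝ) - (B : ℝ)) / (K : ℝ)⌉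

namespace NAdmissible

variable {n K : ℕ}

theorem exists_sub_mul_lt (h : NAdmissible n K) (hK : 0 < K) (t b : ℝ) :
    ∃ T : ℤ, ∀ i j : ℕ, 1 ≤ i → i ≤ n → 1 ≤ j → j ≤ n →
      ((i : ℤ) - j) * T < (⌈i * t - b⌉ - ⌈j * t - b⌉ + 1) * K := by
  obtain ⟨T, B, hTB⟩ := h t b
  refine ⟨T, fun i j hi hin hj hjn ↦ ?_⟩
  rw [hTB i hi hin, hTB j hj hjn]
  have hK' : (0 : ℝ) < K := Nat.cast_pos.2 hK
  have hceil_i := Int.le_ceil (((i : ℝ) * T - B) / K)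
  have hceil_j := Int.ceil_lt_add_one (((j : ℝ) * T - B) / K)
  have hdiff : ((i : ℝ) - j) * T / K =
      ((i : ℝ) * T - B) / K - ((j : ℝ) * T - B) / K := by ring
  have hlt : ((i : ℝ) - j) * T / K <
      ⌈((i : ℝ) * T - B) / K⌉ - ⌈((j : ℝ) * T - B) / K⌉ + 1 := by linarith
  exact_mod_cast (div_lt_iff₀ hK').1 hlt

theorem exists_mul_lt_and_lt_mul (h : NAdmissible n K) (hK : 0 < K) {q : ℕ} (hq : 0 < q)
    (hqn : q + 2 ≤ n) : ∃ T : ℤ, ((q : ℤ) - 1) * T < K ∧ (K : ℤ) < (q + 1) * T := by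
  have hq' : (1 : ℝ) ≤ q := Nat.one_le_cast.2 hq
  have hq0 : (0 : ℝ) < q := by linarith
  have ceil_one : ⌈((1 : ℕ) : ℝ) * (1 / q) - 1 / q⌉ = 0 := by simp
  have ceil_two : ⌈((2 : ℕ) : ℝ) * (1 / q) - 1 / q⌉ = 1 := by
    rw [show ((2 : ℕ) : ℝ) * (1 / q) - 1 / q = 1 / q by push_cast; ring, Int.ceil_eq_iff,
      lt_div_iff₀ hq0, div_le_iff₀ hq0]
    constructor
    · simp
    · simpa using hq'
  have ceil_add_one : ⌈((q + 1 : ℕ) : ℝ) * (1 / q) - 1 / q⌉ = 1 := by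
    rw [show ((q + 1 : ℕ) : ℝ) * (1 / q) - 1 / q = 1 by push_cast; field_simp; ring, Int.ceil_one]
  have ceil_add_two : ⌈((q + 2 : ℕ) : ℝ) * (1 / q) - 1 / q⌉ = 2 := by
    rw [show ((q + 2 : ℕ) : ℝ) * (1 / q) - 1 / q = (q + 1) / q by push_cast; field_simp; ring,
      Int.ceil_eq_iff, lt_div_iff₀ hq0, div_le_iff₀ hq0]
    constructor <;> push_cast <;> linarith
  obtain ⟨T, hT⟩ := h.exists_sub_mul_lt hK (1 / q) (1 / q)
  have hlower := hT 1 (q + 2) le_rfl (by lia) (by lia) hqn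
  have hupper := hT (q + 1) 2 (by lia) (by lia) (by lia) (by lia)
  rw [ceil_one, ceil_add_two] at hlower
  rw [ceil_add_one, ceil_two] at hupper
  push_cast at hlower hupper
  exact ⟨T, by linarith, by linarith⟩

end NAdmissible

theorem le_three_mul_of_mul_lt_of_lt_mul {m k x y z : ℤ} (hm : 1 ≤ m)
    (hx : (m + 1) * x < k) (hx' : k < (m + 3) * x)
    (hy : m * y < k) (hy' : k < (m + 2) * y)
    (hz : (m - 1) * z < k) (hz' : k < (m + 1) * z) : m ≤ 3 * x := by
  have hxz : x + 1 ≤ z := lt_of_mul_lt_mul_left (hx.trans hz') (by lia)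
  rcases le_or_gt y x with hyx | hxy
  · have : (m - 1) * (x + 1) < (m + 2) * x := calc
      (m - 1) * (x + 1) ≤ (m - 1) * z := mul_le_mul_of_nonneg_left hxz (by lia)
      _ < k := hz
      _ < (m + 2) * y := hy'
      _ ≤ (m + 2) * x := mul_le_mul_of_nonneg_left hyx (by lia)
    linarith
  · have : m * (x + 1) < (m + 3) * x := calc
      m * (x + 1) ≤ m * y := mul_le_mul_of_nonneg_left hxy (by lia)
      _ < k := hy
      _ < (m + 3) * x := hx'
    linarith

theorem stmt_5_general (n K : ℕ) (hK : 1 ≤ K) (h : NAdmissible n K) :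
    (n - 3) * (n - 4) < 3 * K := by
  rcases le_or_gt n 4 with hn | hn
  · rw [Nat.sub_eq_zero_of_le hn]
    lia
  obtain ⟨m, rfl⟩ := Nat.exists_eq_add_of_le' hn.le
  obtain ⟨x, hx, hx'⟩ := h.exists_mul_lt_and_lt_mul hK (q := m + 2) (by lia) le_rfl
  obtain ⟨y, hy, hy'⟩ := h.exists_mul_lt_and_lt_mul hK (q := m + 1) (by lia) (by lia)
  obtain ⟨z, hz, hz'⟩ := h.exists_mul_lt_and_lt_mul hK (q := m) (by lia) (by lia)
  push_cast at hx hx' hy hy' hz hz'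
  have hmx : (m : ℤ) ≤ 3 * x :=
    le_three_mul_of_mul_lt_of_lt_mul (k := K) (y := y) (z := z) (by lia) (by linarith)
      (by linarith) (by linarith) (by linarith) hz hz'
  have : ((m : ℤ) + 1) * m < 3 * K := calc
    ((m : ℤ) + 1) * m ≤ (m + 1) * (3 * x) := mul_le_mul_of_nonneg_left hmx (by lia)
    _ < 3 * K := by linarith
  exact_mod_cast this

/-- For `n ≥ 27`, every `n`-admissible `K ≥ 1` satisfies `4K > n²`. -/
theorem stmt_5 (n : ℕ) (hn : 27 ≤ n) (K : ℕ) (hK : 1 ≤ K)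
    (h : NAdmissible n K) : n ^ 2 < 4 * K := by
  obtain ⟨m, rfl⟩ := Nat.exists_eq_add_of_le' hn
  have hbound : (m + 24) * (m + 23) < 3 * K := stmt_5_general (m + 27) K hK h
  nlinarith
end

section
/- Let n ≥ 2 and K ≥ 1 be natural numbers, let t, b be real numbers, and let T, B be integers such that ⌈(i·T − B)/K⌉ = ⌈i·t − b⌉ for all i ∈ {1, …, n}. Then K·b − K·(n + 1)/(n − 1) < B < K·b + K·(n + 1)/(n − 1). -/
/-!
Sampling the two affine functions `i ↦ (i * T - B) / K` and `i ↦ i * t - b` at a point where their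
ceilings agree shows that their difference `i ↦ i * (T / K - t) - (B / K - b)` is less than `1` in
absolute value there. Extrapolating this affine difference from two sample points to `i = 0` bounds
the intercept `B / K - b`.
-/

theorem abs_sub_lt_one_of_ceil_eq_ceil {R : Type*} [Ring R] [LinearOrder R] [IsStrictOrderedRing R]
    [FloorRing R] {u v : R} (h : ⌈u⌉ = ⌈v⌉) : |u - v| < 1 := by
  have h_neg : ⌊-v⌋ = ⌊-u⌋ := by rw [Int.floor_neg, Int.floor_neg, h]
  simpa only [neg_sub_neg] using Int.abs_sub_lt_one_of_floor_eq_floor h_neg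

section Field

variable {𝕜 : Type*} [Field 𝕜] [LinearOrder 𝕜] [IsStrictOrderedRing 𝕜]

theorem abs_intercept_lt_of_abs_affine_lt {a c x y ε : 𝕜} (hx : 0 ≤ x) (hxy : x < y)
    (hεx : |x * a - c| < ε) (hεy : |y * a - c| < ε) :
    |c| < ε * (x + y) / (y - x) := by
  have hyx : 0 < y - x := sub_pos.2 hxy
  have hy : 0 < y := hx.trans_lt hxy
  rw [lt_div_iff₀ hyx]
  calc
    |c| * (y - x) = |x * (y * a - c) - y * (x * a - c)| := by
      rw [show x * (y * a - c) - y * (x * a - c) = c * (y - x) by ring, abs_mul, abs_of_pos hyx]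
    _ ≤ x * |y * a - c| + y * |x * a - c| := by
      simpa only [abs_mul, abs_of_nonneg hx, abs_of_pos hy] using
        abs_sub (x * (y * a - c)) (y * (x * a - c))
    _ < x * ε + y * ε :=
      add_lt_add_of_le_of_lt (mul_le_mul_of_nonneg_left hεy.le hx) (mul_lt_mul_of_pos_left hεx hy)
    _ = ε * (x + y) := by ring

theorem stmt_14_general [FloorRing 𝕜] {K t b T B x y : 𝕜} (hK : 0 < K) (hx : 0 ≤ x) (hxy : x < y)
    (hceil_x : ⌈(x * T - B) / K⌉ = ⌈x * t - b⌉) (hceil_y : ⌈(y * T - B) / K⌉ = ⌈y * t - b⌉) :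
    |B - K * b| < K * (x + y) / (y - x) := by
  have hsample {z : 𝕜} (hz : ⌈(z * T - B) / K⌉ = ⌈z * t - b⌉) :
      |z * (T / K - t) - (B / K - b)| < 1 := by
    convert abs_sub_lt_one_of_ceil_eq_ceil hz using 2
    ring
  have hintercept : |B / K - b| < (x + y) / (y - x) := by
    simpa only [one_mul] using
      abs_intercept_lt_of_abs_affine_lt hx hxy (hsample hceil_x) (hsample hceil_y)
  calc
    |B - K * b| = K * |B / K - b| := by
      rw [show B - K * b = K * (B / K - b) by field_simp, abs_mul, abs_of_pos hK]
    _ < K * ((x + y) / (y - x)) := mul_lt_mul_of_pos_left hintercept hK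
    _ = K * (x + y) / (y - x) := (mul_div_assoc ..).symm

end Field

/-- Range of valid `B`: `Kb − K(n+1)/(n−1) < B < Kb + K(n+1)/(n−1)`. -/
theorem stmt_14 (n K : ℕ) (hn : 2 ≤ n) (hK : 1 ≤ K) (t b : ℝ) (T B : ℤ)
    (h : ∀ i : ℕ, 1 ≤ i → i ≤ n →
      ⌈((i : ℝ) * (T : ℝ) - (B : ℝ)) / (K : ℝ)⌉ = ⌈(i : ℝ) * t - b⌉) :
    (K : ℝ) * b - (K : ℝ) * ((n : ℝ) + 1) / ((n : ℝ) - 1) < (B : ℝ) ∧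
    (B : ℝ) < (K : ℝ) * b + (K : ℝ) * ((n : ℝ) + 1) / ((n : ℝ) - 1) := by
  have hbound : |(B : ℝ) - K * b| < K * (n + 1) / (n - 1) := by
    have one_le_n : 1 ≤ n := one_le_two.trans hn
    simpa only [Nat.cast_one, add_comm] using stmt_14_general (Nat.cast_pos.2 hK)
      (Nat.cast_nonneg 1) (Nat.cast_lt.2 hn) (h 1 le_rfl one_le_n) (h n one_le_n le_rfl)
  obtain ⟨hupper, hlower⟩ := abs_sub_lt_iff.1 hbound
  exact ⟨sub_lt_comm.1 hlower, sub_lt_iff_lt_add'.1 hupper⟩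
end
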